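/- arXiv:1911.04816 — 2 statements merged into one kernel-verified Lean document; each statement's English description precedes it below -/
import Mathlib

section
/- (Generalized Wierman coupling.) Let d ≥ 1, p ∈ (0, 1/2], let Λ ⊆ ℤ^d, S ⊆ Λ, and let (ξ^{(x)})_{x∈S} be a family of infinite words in Ξ. There exists a coupling of two random configurations (ω, ω̃), each marginally distributed according to ℙ_p, such that almost surely, for every y ∈ Λ: if in ω there exists x ∈ S joined to y by a path of 1-vertices staying in Λ, then in ω̃ there exists x ∈ S with x →^{ξ^{(x)}} y in Λ, i.e. a self-avoiding path x = v₀ ∼ ⋯ ∼ v_{n−1} = y contained in Λ with ω̃_{v_i} = ξ^{(x)}_i for all 0 ≤ i ≤ n−1. -/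
open MeasureTheory Set

namespace PercWords

/-- Vertices of the hypercubic lattice `ℤ^d`. -/
abbrev Vtx (d : ℕ) := Fin d → ℤ

/-- Site percolation configurations on `ℤ^d` (`true` = state 1, `false` = state 0). -/
abbrev Config (d : ℕ) := Vtx d → Bool

/-- `u ∼ v` : the Euclidean distance between `u` and `v` is `1`. -/
def adj {d : ℕ} (u v : Vtx d) : Prop := (∑ i, (u i - v i) ^ 2) = 1

/-- `μ` is Bernoulli site percolation with parameter `p` on the index set `ι`:
a probability measure under which, independently, each site has state `true`
with probability `p` and state `false` with probability `1 - p`. -/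
def IsBernoulliFam {ι : Type} (p : ℝ) (μ : Measure (ι → Bool)) : Prop :=
  IsProbabilityMeasure μ ∧
    ∀ (s : Finset ι) (f : ι → Bool),
      μ {ω | ∀ v ∈ s, ω v = f v} =
        ∏ v ∈ s, ENNReal.ofReal (if f v then p else 1 - p)

/-- `x ⇒^{ξ_{[a,b]}} y` inside `A` : there is a self-avoiding path
`x = v₀ ∼ ⋯ ∼ v_{b−a} = y` contained in `A` with `ω (v i) = ξ (a + i)` for all
`0 ≤ i ≤ b − a` (i.e. the finite word `ξ_{[a,b]}` is read along the path). -/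
def wordConnIn {d : ℕ} (ω : Config d) (ξ : ℕ → Bool) (a b : ℕ) (A : Set (Vtx d))
    (x y : Vtx d) : Prop :=
  a ≤ b ∧ ∃ γ : ℕ → Vtx d, γ 0 = x ∧ γ (b - a) = y ∧
    (∀ i < b - a, adj (γ i) (γ (i + 1))) ∧
    (∀ i ≤ b - a, ∀ j ≤ b - a, γ i = γ j → i = j) ∧
    (∀ i ≤ b - a, γ i ∈ A) ∧ (∀ i ≤ b - a, ω (γ i) = ξ (a + i))

/-- `y` is joined to `x` by a path of `1`-vertices staying inside `A`. -/
def oneConnIn {d : ℕ} (ω : Config d) (A : Set (Vtx d)) (x y : Vtx d) : Prop :=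
  ∃ n : ℕ, ∃ γ : ℕ → Vtx d, γ 0 = x ∧ γ n = y ∧
    (∀ i < n, adj (γ i) (γ (i + 1))) ∧ ∀ i ≤ n, γ i ∈ A ∧ ω (γ i) = true


/-!
Give every vertex an independent sign, equal to `1` and to `-1` with probability `p` each and to `0`
otherwise, and let `ω` be the set of vertices of sign `1`. Explore the cluster of `S` in `ω` one
vertex at a time, following for each examined vertex a path of `1`-vertices back to `S`, so that
its position in the word of the root of that path is known when the vertex is examined. If the word
requires the letter `0` there, reverse the sign of the vertex, and let `ω̃` be the set of vertices
of sign `1` after all these reversals. Whether a sign is reversed is decided before that sign is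
looked at, and the law of a sign is symmetric, so the reversals preserve the law of the signs.
An examined `1`-vertex of `ω` has sign `1`, so its state in `ω̃` is exactly the required letter.
-/

open Filter

open scoped Topology

section MeasurePreserving

variable {α β ι : Type*} [MeasurableSpace α] [MeasurableSpace β]

open scoped Classical in
lemma measurePreserving_piecewise {μ : Measure α} {ν : Measure β} {f g : α → β}
    (hf : MeasurePreserving f μ ν) (hg : MeasurePreserving g μ ν) {s : Set α} {t : Set β}
    (ht : MeasurableSet t) (hfs : f ⁻¹' t = s) (hgs : g ⁻¹' t = s) :
    MeasurePreserving (s.piecewise f g) μ ν := by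
  have hs : MeasurableSet s := hfs ▸ hf.measurable ht
  have hfg : Measurable (s.piecewise f g) := hf.measurable.piecewise hs hg.measurable
  refine ⟨hfg, Measure.ext fun B hB => ?_⟩
  calc μ.map (s.piecewise f g) B
      = μ (f ⁻¹' (B ∩ t) ∪ g ⁻¹' (B \ t)) := by
        rw [Measure.map_apply hfg hB, piecewise_preimage, Set.ite, preimage_inter, preimage_sdiff,
          hfs, hgs]
    _ = μ (f ⁻¹' (B ∩ t)) + μ (g ⁻¹' (B \ t)) := by
        refine measure_union ?_ (hg.measurable (hB.diff ht))
        rw [preimage_inter, preimage_sdiff, hfs, hgs]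
        exact disjoint_sdiff_right.mono_left inter_subset_right
    _ = ν B := by
        rw [hf.measure_preimage (hB.inter ht).nullMeasurableSet,
          hg.measure_preimage (hB.diff ht).nullMeasurableSet, measure_inter_add_sdiff B ht]

lemma measurePreserving_infinitePi_of_eventually_eq {X : ι → Type*}
    [∀ i, MeasurableSpace (X i)] {μ : Measure α} [IsFiniteMeasure μ]
    {m : ∀ i, Measure (X i)} [∀ i, IsProbabilityMeasure (m i)]
    {f : ℕ → α → ∀ i, X i} {g : α → ∀ i, X i}
    (hf : ∀ n, MeasurePreserving (f n) μ (Measure.infinitePi m))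
    (hfg : ∀ a i, ∀ᶠ n in atTop, f n a i = g a i) :
    MeasurePreserving g μ (Measure.infinitePi m) := by
  have hg : Measurable g := by
    refine measurable_pi_iff.2 fun i B hB => ?_
    refine measurableSet_of_tendsto_indicator atTop
      (As := fun n => (fun a => f n a i) ⁻¹' B)
      (fun n => (measurable_pi_apply i).comp (hf n).measurable hB) fun a => ?_
    filter_upwards [hfg a i] with n hn
    simp only [mem_preimage, hn]
  refine ⟨hg, Measure.eq_infinitePi m fun s B hB => ?_⟩
  have hsB : MeasurableSet (Set.pi (s : Set ι) B) :=
    MeasurableSet.pi s.countable_toSet fun i _ => hB i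
  have hlim : Tendsto (fun n => μ (f n ⁻¹' Set.pi s B)) atTop (𝓝 (μ (g ⁻¹' Set.pi s B))) := by
    refine tendsto_measure_of_tendsto_indicator_of_isFiniteMeasure atTop μ
      (fun n => (hf n).measurable hsB) fun a => ?_
    filter_upwards [(eventually_all_finset s).2 fun i _ => hfg a i] with n hn
    simp only [mem_preimage, Set.mem_pi, Finset.mem_coe]
    exact forall₂_congr fun i hi => by rw [hn i hi]
  have hconst (n : ℕ) : μ (f n ⁻¹' Set.pi s B) = ∏ i ∈ s, m i (B i) := by
    rw [(hf n).measure_preimage hsB.nullMeasurableSet, Measure.infinitePi_pi m fun i _ => hB i]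
  rw [Measure.map_apply hg hsB]
  exact tendsto_nhds_unique hlim (by simp only [hconst, tendsto_const_nhds])

end MeasurePreserving

section ApplyOn

variable {V X : Type*} {e : X → X} {A B : Set V} {t : V → X} {v : V}

open scoped Classical in
/-- The configuration `t` with the map `e` applied to its coordinates in `A`. -/
noncomputable def applyOn (e : X → X) (A : Set V) (t : V → X) : V → X :=
  A.piecewise (e ∘ t) t

lemma applyOn_of_mem (h : v ∈ A) : applyOn e A t v = e (t v) :=
  if_pos h

lemma applyOn_of_notMem (h : v ∉ A) : applyOn e A t v = t v :=
  if_neg h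

lemma applyOn_empty : applyOn e ∅ t = t :=
  funext fun _ => applyOn_of_notMem (notMem_empty _)

lemma applyOn_union (h : Disjoint A B) :
    applyOn e (A ∪ B) t = applyOn e A (applyOn e B t) := by
  funext v
  by_cases hA : v ∈ A
  · rw [applyOn_of_mem (mem_union_left B hA), applyOn_of_mem hA,
      applyOn_of_notMem (h.notMem_of_mem_left hA)]
  · by_cases hB : v ∈ B
    · rw [applyOn_of_mem (mem_union_right A hB), applyOn_of_notMem hA, applyOn_of_mem hB]
    · rw [applyOn_of_notMem (fun h => h.elim hA hB), applyOn_of_notMem hA, applyOn_of_notMem hB]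

lemma measurePreserving_applyOn [MeasurableSpace X] {m : V → Measure X}
    [∀ v, IsProbabilityMeasure (m v)] (he : ∀ v, MeasurePreserving e (m v) (m v)) (A : Set V) :
    MeasurePreserving (applyOn e A) (Measure.infinitePi m) (Measure.infinitePi m) := by
  classical
  have hf (v : V) : MeasurePreserving (if v ∈ A then e else id) (m v) (m v) := by
    split_ifs
    exacts [he v, MeasurePreserving.id _]
  have happly : applyOn e A = fun t v => (if v ∈ A then e else id) (t v) := by
    funext t v
    split_ifs with hv
    exacts [applyOn_of_mem hv, applyOn_of_notMem hv]
  rw [happly]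
  refine ⟨measurable_pi_lambda _ fun v => (hf v).measurable.comp (measurable_pi_apply v), ?_⟩
  rw [Measure.infinitePi_map_pi m fun v => (hf v).measurable]
  simp only [(hf _).map_eq]

end ApplyOn

section Predictable

variable {V X Y : Type*} {site : ℕ → V} {E : ℕ → Set (V → X)} {e : X → X} {t : V → X}
  {v : V} {n : ℕ}

/-- A predictable scheme of modifications of a random configuration `t`: at time `n` the coordinate
`site n` is modified if `t ∈ E n`. No coordinate is modified twice, and on `E n` the decisions made
up to time `n` do not depend on the coordinate `site n`. -/
structure IsPredictable [MeasurableSpace X] (site : ℕ → V) (E : ℕ → Set (V → X)) : Prop where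
  measurableSet (n : ℕ) : MeasurableSet (E n)
  mem_iff_mem {n k : ℕ} {t t' : V → X} (ht : t ∈ E n) (h : EqOn t t' {site n}ᶜ) (hk : k ≤ n) :
    t ∈ E k ↔ t' ∈ E k
  site_ne_site {k n : ℕ} {t : V → X} (hkn : k < n) (hk : t ∈ E k) (hn : t ∈ E n) :
    site k ≠ site n

/-- The set of coordinates of `t` that the scheme `(site, E)` modifies before time `n`. -/
def modifiedBefore (site : ℕ → V) (E : ℕ → Set (V → X)) (n : ℕ) (t : V → X) : Set V :=
  {v | ∃ k < n, t ∈ E k ∧ site k = v}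

/-- The set of all coordinates of `t` that the scheme `(site, E)` modifies. -/
def modified (site : ℕ → V) (E : ℕ → Set (V → X)) (t : V → X) : Set V :=
  {v | ∃ k, t ∈ E k ∧ site k = v}

lemma modifiedBefore_zero : modifiedBefore site E 0 t = ∅ := by
  simp only [modifiedBefore, not_lt_zero, false_and, exists_false, ofPred_false]

lemma mem_modifiedBefore_succ :
    v ∈ modifiedBefore site E (n + 1) t ↔
      v ∈ modifiedBefore site E n t ∨ t ∈ E n ∧ site n = v := by
  simp only [modifiedBefore, Nat.lt_succ_iff_lt_or_eq, or_and_right, exists_or, exists_eq_left,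
    mem_ofPred_eq]

lemma modifiedBefore_succ_of_mem (h : t ∈ E n) :
    modifiedBefore site E (n + 1) t = modifiedBefore site E n t ∪ {site n} := by
  ext v
  rw [mem_modifiedBefore_succ, and_iff_right h, eq_comm, mem_union, mem_singleton_iff]

lemma modifiedBefore_succ_of_notMem (h : t ∉ E n) :
    modifiedBefore site E (n + 1) t = modifiedBefore site E n t := by
  ext v
  rw [mem_modifiedBefore_succ, or_iff_left fun hn => h hn.1]

lemma eventually_mem_modifiedBefore_iff (site : ℕ → V) (E : ℕ → Set (V → X)) (t : V → X) (v : V) :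
    ∀ᶠ n in atTop, (v ∈ modifiedBefore site E n t ↔ v ∈ modified site E t) := by
  by_cases h : v ∈ modified site E t
  · obtain ⟨k, hk⟩ := id h
    filter_upwards [eventually_gt_atTop k] with n hn
    exact iff_of_true ⟨k, hn, hk⟩ h
  · exact Eventually.of_forall fun n => iff_of_false (fun ⟨k, _, hk⟩ => h ⟨k, hk⟩) h

variable [MeasurableSpace X] [MeasurableSpace Y]

namespace IsPredictable

lemma preimage_comp {E : ℕ → Set (V → Y)} (h : IsPredictable site E) {g : X → Y}
    (hg : Measurable g) : IsPredictable site fun n => {t : V → X | g ∘ t ∈ E n} where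
  measurableSet n :=
    measurable_pi_lambda _ (fun v => hg.comp (measurable_pi_apply v)) (h.measurableSet n)
  mem_iff_mem ht htt' hk := h.mem_iff_mem ht (htt'.comp_left (g := g)) hk
  site_ne_site hkn hk hn := h.site_ne_site hkn hk hn

lemma applyOn_mem_iff (h : IsPredictable site E) :
    applyOn e {site n} t ∈ E n ↔ t ∈ E n := by
  have heq : EqOn (applyOn e {site n} t) t {site n}ᶜ := fun _ => applyOn_of_notMem
  exact ⟨fun ht => (h.mem_iff_mem ht heq le_rfl).1 ht,
    fun ht => (h.mem_iff_mem ht heq.symm le_rfl).1 ht⟩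

open scoped Classical in
lemma applyOn_modifiedBefore_succ (h : IsPredictable site E) :
    applyOn e (modifiedBefore site E (n + 1) t) t =
      applyOn e (modifiedBefore site E n ((E n).piecewise (applyOn e {site n}) id t))
        ((E n).piecewise (applyOn e {site n}) id t) := by
  by_cases ht : t ∈ E n
  · rw [piecewise_eq_of_mem _ _ _ ht, modifiedBefore_succ_of_mem ht, applyOn_union]
    · congr 1
      ext v
      refine exists_congr fun k => and_congr_right fun hk => and_congr_left fun _ => ?_
      exact h.mem_iff_mem ht (fun _ hv => (applyOn_of_notMem hv).symm) hk.le
    · rw [disjoint_singleton_right]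
      rintro ⟨k, hk, htk, hsite⟩
      exact h.site_ne_site hk htk ht hsite
  · rw [piecewise_eq_of_notMem _ _ _ ht, modifiedBefore_succ_of_notMem ht, id]

variable {m : V → Measure X} [∀ v, IsProbabilityMeasure (m v)]

lemma measurePreserving_modifiedBefore (h : IsPredictable site E)
    (he : ∀ v, MeasurePreserving e (m v) (m v)) (n : ℕ) :
    MeasurePreserving (fun t => applyOn e (modifiedBefore site E n t) t)
      (Measure.infinitePi m) (Measure.infinitePi m) := by
  classical
  induction n with
  | zero =>
    simp only [modifiedBefore_zero, applyOn_empty]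
    exact MeasurePreserving.id _
  | succ n ih =>
    simp only [h.applyOn_modifiedBefore_succ]
    exact ih.comp (measurePreserving_piecewise (measurePreserving_applyOn he {site n})
      (MeasurePreserving.id _) (h.measurableSet n) (Set.ext fun t => h.applyOn_mem_iff) rfl)

theorem measurePreserving_modified (h : IsPredictable site E)
    (he : ∀ v, MeasurePreserving e (m v) (m v)) :
    MeasurePreserving (fun t => applyOn e (modified site E t) t)
      (Measure.infinitePi m) (Measure.infinitePi m) := by
  refine measurePreserving_infinitePi_of_eventually_eq
    (h.measurePreserving_modifiedBefore he) fun t v => ?_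
  filter_upwards [eventually_mem_modifiedBefore_iff site E t v] with n hn
  by_cases hv : v ∈ modified site E t
  · rw [applyOn_of_mem (hn.2 hv), applyOn_of_mem hv]
  · rw [applyOn_of_notMem (mt hn.1 hv), applyOn_of_notMem hv]

end IsPredictable

end Predictable

section Paths

variable {V : Type*} {r : V → V → Prop} {A B : Set V} {ω : V → Bool} {w : ℕ → Bool} {n : ℕ}
  {x y z : V}

/-- `γ 0, …, γ n` is a path from `x` to `y` in `A` for the adjacency relation `r`. -/
def IsPathIn (r : V → V → Prop) (A : Set V) (n : ℕ) (γ : ℕ → V) (x y : V) : Prop :=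
  γ 0 = x ∧ γ n = y ∧ (∀ i < n, r (γ i) (γ (i + 1))) ∧ ∀ i ≤ n, γ i ∈ A

/-- `y` is joined to `x` by a path of `1`-vertices of `ω` staying in `A`. -/
def OpenConn (r : V → V → Prop) (A : Set V) (ω : V → Bool) (x y : V) : Prop :=
  ∃ (n : ℕ) (γ : ℕ → V), IsPathIn r A n γ x y ∧ ∀ i ≤ n, ω (γ i) = true

/-- The first `n + 1` letters of `w` are read in `ω` along a self-avoiding path from `x` to `y`
in `A`. -/
def ReadsWord (r : V → V → Prop) (A : Set V) (ω : V → Bool) (w : ℕ → Bool) (n : ℕ) (x y : V) :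
    Prop :=
  ∃ γ : ℕ → V, IsPathIn r A n γ x y ∧ InjOn γ (Iic n) ∧ ∀ i ≤ n, ω (γ i) = w i

lemma ReadsWord.mono (h : ReadsWord r A ω w n x y) (hAB : A ⊆ B) : ReadsWord r B ω w n x y := by
  obtain ⟨γ, ⟨h0, hn, hadj, hA⟩, hγ⟩ := h
  exact ⟨γ, ⟨h0, hn, hadj, fun i hi => hAB (hA i hi)⟩, hγ⟩

lemma readsWord_zero (hx : x ∈ A) (hω : ω x = w 0) : ReadsWord r A ω w 0 x x := by
  refine ⟨fun _ => x, ⟨rfl, rfl, fun i hi => (Nat.not_lt_zero i hi).elim, fun _ _ => hx⟩, ?_, ?_⟩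
  · intro i hi j hj _
    rw [Nat.le_zero.1 hi, Nat.le_zero.1 hj]
  · intro i hi
    rw [Nat.le_zero.1 hi, hω]

lemma ReadsWord.succ (h : ReadsWord r A ω w n x y) (hAB : A ⊆ B) (hyz : r y z) (hzA : z ∉ A)
    (hzB : z ∈ B) (hω : ω z = w (n + 1)) : ReadsWord r B ω w (n + 1) x z := by
  obtain ⟨γ, ⟨h0, hn, hadj, hA⟩, hinj, hw⟩ := h
  set γ' : ℕ → V := Function.update γ (n + 1) z
  have hlast : γ' (n + 1) = z := Function.update_self _ _ _
  have hold (i : ℕ) (hi : i ≤ n) : γ' i = γ i := Function.update_of_ne (by lia) _ _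
  have hne (i : ℕ) (hi : i ≤ n) : γ i ≠ z := fun h => hzA (h ▸ hA i hi)
  refine ⟨γ', ⟨(hold 0 n.zero_le).trans h0, hlast, fun i hi => ?_, fun i hi => ?_⟩, ?_,
    fun i hi => ?_⟩
  · obtain hi' | rfl := Nat.lt_succ_iff_lt_or_eq.1 hi
    · rw [hold i hi'.le, hold (i + 1) hi']
      exact hadj i hi'
    · rw [hold i le_rfl, hlast, hn]
      exact hyz
  · obtain hi' | rfl := Nat.le_succ_iff.1 hi
    · exact hold i hi' ▸ hAB (hA i hi')
    · exact hlast ▸ hzB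
  · intro i hi j hj hij
    obtain hi' | rfl := Nat.le_succ_iff.1 (mem_Iic.1 hi) <;>
      obtain hj' | rfl := Nat.le_succ_iff.1 (mem_Iic.1 hj)
    · rw [hold i hi', hold j hj'] at hij
      exact hinj hi' hj' hij
    · rw [hold i hi', hlast] at hij
      exact (hne i hi' hij).elim
    · rw [hold j hj', hlast] at hij
      exact (hne j hj' hij.symm).elim
    · rfl
  · obtain hi' | rfl := Nat.le_succ_iff.1 hi
    · exact (congrArg ω (hold i hi')).trans (hw i hi')
    · exact (congrArg ω hlast).trans hω

lemma isOpen_forall_le_apply_eq (n : ℕ) (γ : ℕ → V) (w : ℕ → Bool) :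
    IsOpen {ω : V → Bool | ∀ i ≤ n, ω (γ i) = w i} := by
  have h : {ω : V → Bool | ∀ i ≤ n, ω (γ i) = w i} =
      ⋂ i ∈ Iic n, (fun ω : V → Bool => ω (γ i)) ⁻¹' {w i} := by
    ext
    simp only [mem_ofPred_eq, mem_iInter, mem_Iic, mem_preimage, mem_singleton_iff]
  rw [h]
  exact (finite_Iic n).isOpen_biInter fun i _ =>
    (isOpen_discrete {w i}).preimage (continuous_apply (γ i))

lemma isOpen_setOf_openConn (r : V → V → Prop) (A : Set V) (x y : V) :
    IsOpen {ω | OpenConn r A ω x y} := by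
  simp only [OpenConn, ofPred_exists]
  exact isOpen_iUnion fun n => isOpen_iUnion fun γ =>
    isOpen_const.and (isOpen_forall_le_apply_eq n γ fun _ => true)

lemma isOpen_setOf_readsWord (r : V → V → Prop) (A : Set V) (w : ℕ → Bool) (n : ℕ) (x y : V) :
    IsOpen {ω | ReadsWord r A ω w n x y} := by
  simp only [ReadsWord, ofPred_exists]
  exact isOpen_iUnion fun γ =>
    isOpen_const.and (isOpen_const.and (isOpen_forall_le_apply_eq n γ w))

lemma measurableSet_forall_openConn_imp_readsWord [Countable V] (r : V → V → Prop) (A S : Set V)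
    (ξ : V → ℕ → Bool) :
    MeasurableSet {w : (V → Bool) × (V → Bool) | ∀ y, (∃ x ∈ S, OpenConn r A w.1 x y) →
      ∃ x ∈ S, ∃ n, ReadsWord r A w.2 (ξ x) n x y} := by
  have hopen (x y : V) : Measurable fun w : (V → Bool) × (V → Bool) => OpenConn r A w.1 x y :=
    (measurableSet_setOfPred.1 (isOpen_setOf_openConn r A x y).measurableSet).comp measurable_fst
  have hreads (x y : V) (n : ℕ) :
      Measurable fun w : (V → Bool) × (V → Bool) => ReadsWord r A w.2 (ξ x) n x y :=
    (measurableSet_setOfPred.1 (isOpen_setOf_readsWord r A (ξ x) n x y).measurableSet).comp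
      measurable_snd
  refine Measurable.setOf (Measurable.forall fun y => Measurable.imp ?_ ?_)
  · exact Measurable.exists fun x => measurable_const.and (hopen x y)
  · exact Measurable.exists fun x => measurable_const.and (Measurable.exists fun n => hreads x y n)

end Paths

section Exploration

variable {V : Type*}

/-- The order to examine the vertex `site`, as the vertex number `index` (counted from `0`) of a
path started at `root`. -/
structure Probe (V : Type*) where
  site : V
  root : V
  index : ℕ

instance [Countable V] : Countable (Probe V) :=
  Function.Injective.countable (f := fun a => (a.site, a.root, a.index))
    fun ⟨_, _, _⟩ ⟨_, _, _⟩ h => by simpa only [Probe.mk.injEq, Prod.mk.injEq] using h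

/-- The data governing the exploration of a configuration along `rel`-paths in `domain` started in
`source`: at time `n` the probe `schedule n` is carried out if it is eligible at that time. -/
structure Exploration (V : Type*) where
  rel : V → V → Prop
  domain : Set V
  source : Set V
  schedule : ℕ → Probe V

namespace Exploration

variable (𝓔 : Exploration V) {ω ω' : V → Bool} {P Q : Set (Probe V)} {a : Probe V} {n : ℕ}
  {ξ : V → ℕ → Bool}

/-- The probe `a` may be carried out after those in `P`: its site is new and lies in the domain,
and `a` either starts a path in the source or extends by one step a path which `P` has followed to
a `1`-vertex. -/
def Eligible (ω : V → Bool) (P : Set (Probe V)) (a : Probe V) : Prop :=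
  a.site ∉ Probe.site '' P ∧ a.site ∈ 𝓔.domain ∧
    ((a.site ∈ 𝓔.source ∧ a.root = a.site ∧ a.index = 0) ∨
      ∃ b ∈ P, ω b.site = true ∧ 𝓔.rel b.site a.site ∧ a.root = b.root ∧ a.index = b.index + 1)

/-- The probes carried out before time `n`. -/
def probed (ω : V → Bool) : ℕ → Set (Probe V)
  | 0 => ∅
  | n + 1 => {a | a ∈ probed ω n ∨ 𝓔.schedule n = a ∧ 𝓔.Eligible ω (probed ω n) a}

/-- The event that the probe scheduled at time `n` is carried out and the word `ξ x` of its root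
`x` requires the letter `0` at its site. -/
def zeroing (ξ : V → ℕ → Bool) (n : ℕ) : Set (V → Bool) :=
  {ω | 𝓔.Eligible ω (𝓔.probed ω n) (𝓔.schedule n) ∧
    ξ (𝓔.schedule n).root (𝓔.schedule n).index = false}

/-- The vertices which are examined at some time and at which the letter `0` is then required. -/
def zeroed (ξ : V → ℕ → Bool) (ω : V → Bool) : Set V :=
  modified (fun n => (𝓔.schedule n).site) (𝓔.zeroing ξ) ω

variable {𝓔}

lemma Eligible.mono (h : 𝓔.Eligible ω P a) (hPQ : P ⊆ Q) (ha : a.site ∉ Probe.site '' Q) :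
    𝓔.Eligible ω Q a :=
  ⟨ha, h.2.1, h.2.2.imp_right fun ⟨b, hb, hba⟩ => ⟨b, hPQ hb, hba⟩⟩

lemma Eligible.congr (h : 𝓔.Eligible ω P a) (hω : EqOn ω ω' (Probe.site '' P)) :
    𝓔.Eligible ω' P a :=
  ⟨h.1, h.2.1, h.2.2.imp_right fun ⟨b, hb, hωb, hba⟩ =>
    ⟨b, hb, (hω (mem_image_of_mem _ hb)).symm.trans hωb, hba⟩⟩

lemma eligible_congr (hω : EqOn ω ω' (Probe.site '' P)) :
    𝓔.Eligible ω P a ↔ 𝓔.Eligible ω' P a :=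
  ⟨fun h => h.congr hω, fun h => h.congr hω.symm⟩

lemma Eligible.mem_probed_succ (h : 𝓔.Eligible ω (𝓔.probed ω n) (𝓔.schedule n)) :
    𝓔.schedule n ∈ 𝓔.probed ω (n + 1) :=
  Or.inr ⟨rfl, h⟩

variable (𝓔 ω) in
lemma monotone_probed : Monotone (𝓔.probed ω) :=
  monotone_nat_of_le_succ fun _ _ => Or.inl

variable (𝓔 ω) in
lemma injOn_site_probed (n : ℕ) : InjOn Probe.site (𝓔.probed ω n) := by
  induction n with
  | zero => exact injOn_empty _
  | succ n ih =>
    rintro a (ha | ⟨rfl, ha⟩) b (hb | ⟨rfl, hb⟩) hab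
    · exact ih ha hb hab
    · exact (hb.1 ⟨a, ha, hab⟩).elim
    · exact (ha.1 ⟨b, hb, hab.symm⟩).elim
    · rfl

lemma site_mem_domain (ha : a ∈ 𝓔.probed ω n) : a.site ∈ 𝓔.domain := by
  induction n with
  | zero => exact ha.elim
  | succ n ih => exact ha.elim ih fun h => h.2.2.1

lemma probed_congr (hω : EqOn ω ω' (Probe.site '' 𝓔.probed ω n)) :
    𝓔.probed ω' n = 𝓔.probed ω n := by
  induction n with
  | zero => rfl
  | succ n ih =>
    have hωn : EqOn ω ω' (Probe.site '' 𝓔.probed ω n) :=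
      hω.mono (image_mono (𝓔.monotone_probed ω n.le_succ))
    simp only [probed, ih hωn, eligible_congr hωn]

lemma measurableSet_eligible [Countable V] (hP : ∀ b, MeasurableSet {ω | b ∈ 𝓔.probed ω n})
    (a : Probe V) : MeasurableSet {ω | 𝓔.Eligible ω (𝓔.probed ω n) a} := by
  have hmem (b : Probe V) : Measurable fun ω => b ∈ 𝓔.probed ω n :=
    measurableSet_setOfPred.1 (hP b)
  have htrue (v : V) : Measurable fun ω : V → Bool => ω v = true :=
    (measurable_of_countable fun b : Bool => b = true).comp (measurable_pi_apply v)
  refine Measurable.setOf (Measurable.and ?_ (measurable_const.and (measurable_const.or ?_)))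
  · exact (Measurable.exists fun b => (hmem b).and measurable_const).not
  · exact Measurable.exists fun b =>
      (hmem b).and ((htrue b.site).and measurable_const)

variable (𝓔) in
lemma measurableSet_mem_probed [Countable V] (n : ℕ) (a : Probe V) :
    MeasurableSet {ω | a ∈ 𝓔.probed ω n} := by
  induction n generalizing a with
  | zero => exact MeasurableSet.empty
  | succ n ih => exact (ih a).union ((MeasurableSet.const _).inter (measurableSet_eligible ih a))

variable (𝓔) in
lemma isPredictable_zeroing [Countable V] (ξ : V → ℕ → Bool) :
    IsPredictable (fun n => (𝓔.schedule n).site) (𝓔.zeroing ξ) where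
  measurableSet n :=
    (measurableSet_eligible (𝓔.measurableSet_mem_probed n) _).inter (MeasurableSet.const _)
  mem_iff_mem {n k ω ω'} hω h hk := by
    have heq : EqOn ω ω' (Probe.site '' 𝓔.probed ω k) :=
      h.mono fun v hv (hvn : v = (𝓔.schedule n).site) =>
        hω.1.1 (hvn ▸ image_mono (𝓔.monotone_probed ω hk) hv)
    simp only [zeroing, mem_ofPred_eq, probed_congr heq, eligible_congr heq]
  site_ne_site {k n ω} hkn hk hn heq :=
    hn.1.1 ⟨_, 𝓔.monotone_probed ω hkn hk.1.mem_probed_succ, heq⟩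

lemma exists_eligible_of_mem_probed (ha : a ∈ 𝓔.probed ω n) :
    ∃ k < n, 𝓔.schedule k = a ∧ 𝓔.Eligible ω (𝓔.probed ω k) a := by
  induction n with
  | zero => exact ha.elim
  | succ n ih =>
    obtain ha | ha := ha
    · obtain ⟨k, hk, h⟩ := ih ha
      exact ⟨k, hk.trans n.lt_succ_self, h⟩
    · exact ⟨n, n.lt_succ_self, ha⟩

lemma site_mem_zeroed_iff (ha : a ∈ 𝓔.probed ω n) :
    a.site ∈ 𝓔.zeroed ξ ω ↔ ξ a.root a.index = false := by
  constructor
  · rintro ⟨k, ⟨hk, hξ⟩, hsite⟩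
    have hka : 𝓔.schedule k = a := 𝓔.injOn_site_probed ω (max (k + 1) n)
      (𝓔.monotone_probed ω (le_max_left _ _) hk.mem_probed_succ)
      (𝓔.monotone_probed ω (le_max_right _ _) ha) hsite
    rwa [hka] at hξ
  · intro hξ
    obtain ⟨k, _, rfl, hk⟩ := exists_eligible_of_mem_probed ha
    exact ⟨k, ⟨hk, hξ⟩, rfl⟩

lemma root_mem_source_and_readsWord
    (hω' : ∀ v, ω v = true → (ω' v = false ↔ v ∈ 𝓔.zeroed ξ ω))
    (ha : a ∈ 𝓔.probed ω n) (hωa : ω a.site = true) :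
    a.root ∈ 𝓔.source ∧
      ReadsWord 𝓔.rel (Probe.site '' 𝓔.probed ω n) ω' (ξ a.root) a.index a.root a.site := by
  induction n generalizing a with
  | zero => exact ha.elim
  | succ n ih =>
    have hletter : ω' a.site = ξ a.root a.index :=
      Bool.eq_iff_iff.2 (by simpa using ((hω' _ hωa).trans (site_mem_zeroed_iff ha)).not)
    have hsite : a.site ∈ Probe.site '' 𝓔.probed ω (n + 1) := mem_image_of_mem _ ha
    have hmono : Probe.site '' 𝓔.probed ω n ⊆ Probe.site '' 𝓔.probed ω (n + 1) :=
      image_mono (𝓔.monotone_probed ω n.le_succ)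
    obtain ha | ⟨-, hnew, -, ⟨hsource, hroot, hindex⟩ | ⟨b, hb, hωb, hba, hroot, hindex⟩⟩ := ha
    · exact (ih ha hωa).imp_right fun h => h.mono hmono
    · rw [hroot, hindex] at hletter ⊢
      exact ⟨hsource, readsWord_zero hsite hletter⟩
    · rw [hroot, hindex] at hletter ⊢
      exact (ih hb hωb).imp_right fun h => h.succ hmono hba hnew hsite hletter

lemma Eligible.exists_probed (hfair : ∃ᶠ k in atTop, 𝓔.schedule k = a)
    (ha : 𝓔.Eligible ω (𝓔.probed ω n) a) :
    ∃ k, ∃ b ∈ 𝓔.probed ω k, b.site = a.site := by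
  obtain ⟨k, hnk, rfl⟩ := frequently_atTop.1 hfair n
  by_cases hk : (𝓔.schedule k).site ∈ Probe.site '' 𝓔.probed ω k
  · exact ⟨k, hk⟩
  · exact ⟨k + 1, _, (ha.mono (𝓔.monotone_probed ω hnk) hk).mem_probed_succ, rfl⟩

lemma exists_probed_of_openConn (hfair : ∀ a, ∃ᶠ k in atTop, 𝓔.schedule k = a) {x y : V}
    (hx : x ∈ 𝓔.source) (hxy : OpenConn 𝓔.rel 𝓔.domain ω x y) :
    ∃ n, ∃ a ∈ 𝓔.probed ω n, a.site = y := by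
  obtain ⟨N, γ, ⟨rfl, rfl, hadj, hdomain⟩, hω⟩ := hxy
  have hstep (i : ℕ) (hi : i ≤ N) : ∃ n, ∃ a ∈ 𝓔.probed ω n, a.site = γ i := by
    induction i with
    | zero =>
      exact Eligible.exists_probed (n := 0) (a := ⟨γ 0, γ 0, 0⟩) (hfair _)
        ⟨fun ⟨_, hb, _⟩ => hb.elim, hdomain 0 hi, Or.inl ⟨hx, rfl, rfl⟩⟩
    | succ i ih =>
      obtain ⟨n, a, ha, hai⟩ := ih (Nat.le_of_succ_le hi)
      by_cases hnew : γ (i + 1) ∈ Probe.site '' 𝓔.probed ω n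
      · exact ⟨n, hnew⟩
      · exact Eligible.exists_probed (a := ⟨γ (i + 1), a.root, a.index + 1⟩) (hfair _)
          ⟨hnew, hdomain _ hi, Or.inr
            ⟨a, ha, hai ▸ hω i (Nat.le_of_succ_le hi), hai ▸ hadj i hi, rfl, rfl⟩⟩
  exact hstep N le_rfl

theorem exists_readsWord_of_openConn (hfair : ∀ a, ∃ᶠ k in atTop, 𝓔.schedule k = a)
    (hω' : ∀ v, ω v = true → (ω' v = false ↔ v ∈ 𝓔.zeroed ξ ω)) {x y : V}
    (hx : x ∈ 𝓔.source) (hxy : OpenConn 𝓔.rel 𝓔.domain ω x y) :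
    ∃ x ∈ 𝓔.source, ∃ n, ReadsWord 𝓔.rel 𝓔.domain ω' (ξ x) n x y := by
  obtain ⟨n, a, ha, rfl⟩ := exists_probed_of_openConn hfair hx hxy
  have hωa : ω a.site = true := by
    obtain ⟨N, γ, ⟨-, hN, -⟩, hω⟩ := hxy
    exact hN ▸ hω N le_rfl
  obtain ⟨hroot, hword⟩ := root_mem_source_and_readsWord hω' ha hωa
  refine ⟨a.root, hroot, a.index, hword.mono ?_⟩
  rintro _ ⟨b, hb, rfl⟩
  exact site_mem_domain hb

end Exploration

lemma exists_seq_frequently_eq (α : Type*) [Countable α] [Nonempty α] :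
    ∃ q : ℕ → α, ∀ a, ∃ᶠ n in atTop, q n = a := by
  obtain ⟨f, hf⟩ := exists_surjective_nat α
  refine ⟨fun n => f n.unpair.1, fun a => frequently_atTop.2 fun N => ?_⟩
  obtain ⟨k, rfl⟩ := hf a
  exact ⟨Nat.pair k N, Nat.right_le_pair k N, by simp only [Nat.unpair_pair]⟩

end Exploration

section SignLaw

variable {V : Type} {p : ℝ}

lemma IsBernoulliFam.unique {μ ν : Measure (V → Bool)} (hμ : IsBernoulliFam p μ)
    (hν : IsBernoulliFam p ν) : μ = ν := by
  classical
  have := hμ.1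
  have := hν.1
  have (s : Finset V) : IsProbabilityMeasure (ν.map s.restrict) :=
    Measure.isProbabilityMeasure_map (Finset.measurable_restrict s).aemeasurable
  have hlim : IsProjectiveLimit μ fun s : Finset V => ν.map s.restrict := by
    intro s
    refine Measure.ext_of_singleton fun f => ?_
    have hcyl : s.restrict (π := fun _ => Bool) ⁻¹' {f} =
        {ω | ∀ v ∈ s, ω v = (fun v => if hv : v ∈ s then f ⟨v, hv⟩ else true) v} := by
      ext ω
      simp +contextual [funext_iff]
    rw [Measure.map_apply (Finset.measurable_restrict s) (measurableSet_singleton f),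
      Measure.map_apply (Finset.measurable_restrict s) (measurableSet_singleton f), hcyl,
      hμ.2, hν.2]
  exact hlim.unique fun _ => rfl

/-- The law of a random sign, which is `1` and `-1` with probability `p` each and `0` otherwise. -/
noncomputable def signLaw (p : ℝ) : Measure ℤ :=
  ENNReal.ofReal p • Measure.dirac 1 + ENNReal.ofReal p • Measure.dirac (-1) +
    ENNReal.ofReal (1 - 2 * p) • Measure.dirac 0

/-- The configuration whose `1`-vertices are the vertices of sign `1`. -/
def positive (t : V → ℤ) : V → Bool :=
  (fun z : ℤ => decide (z = 1)) ∘ t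

lemma measurable_positive : Measurable (positive (V := V)) :=
  measurable_pi_lambda _ fun v =>
    (measurable_of_countable fun z : ℤ => decide (z = 1)).comp (measurable_pi_apply v)

lemma measurePreserving_neg_signLaw (p : ℝ) :
    MeasurePreserving (fun z : ℤ => -z) (signLaw p) (signLaw p) := by
  have hneg : Measurable fun z : ℤ => -z := measurable_of_countable _
  refine ⟨hneg, ?_⟩
  simp only [signLaw, Measure.map_add _ _ hneg, Measure.map_smul, Measure.map_dirac, neg_neg,
    neg_zero]
  rw [add_comm (ENNReal.ofReal p • Measure.dirac (-1 : ℤ))]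

lemma isProbabilityMeasure_signLaw (hp0 : 0 ≤ p) (hp : p ≤ 1 / 2) :
    IsProbabilityMeasure (signLaw p) := by
  constructor
  simp only [signLaw, Measure.add_apply, Measure.smul_apply, measure_univ, smul_eq_mul, mul_one]
  rw [← ENNReal.ofReal_add hp0 hp0, ← ENNReal.ofReal_add (by linarith) (by linarith),
    show p + p + (1 - 2 * p) = 1 by ring, ENNReal.ofReal_one]

lemma signLaw_setOf_decide_eq (hp0 : 0 ≤ p) (hp : p ≤ 1 / 2) (b : Bool) :
    signLaw p {z | decide (z = 1) = b} = ENNReal.ofReal (if b then p else 1 - p) := by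
  cases b
  · have hsum : 1 - p = p + (1 - 2 * p) := by ring
    simp [signLaw, hsum, ENNReal.ofReal_add hp0 (by linarith : 0 ≤ 1 - 2 * p)]
  · simp [signLaw]

lemma isBernoulliFam_map_positive (hp0 : 0 ≤ p) (hp : p ≤ 1 / 2) :
    IsBernoulliFam p ((Measure.infinitePi fun _ : V => signLaw p).map positive) := by
  have := isProbabilityMeasure_signLaw hp0 hp
  refine ⟨Measure.isProbabilityMeasure_map measurable_positive.aemeasurable, fun s f => ?_⟩
  have hcyl : {ω : V → Bool | ∀ v ∈ s, ω v = f v} = Set.pi (s : Set V) fun v => {f v} := by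
    ext
    simp only [mem_ofPred_eq, Set.mem_pi, Finset.mem_coe, mem_singleton_iff]
  have hpre : positive ⁻¹' Set.pi (s : Set V) (fun v => {f v}) =
      Set.pi s fun v => {z : ℤ | decide (z = 1) = f v} := rfl
  rw [hcyl, Measure.map_apply measurable_positive
      (MeasurableSet.pi s.countable_toSet fun v _ => measurableSet_singleton _), hpre,
    Measure.infinitePi_pi _ fun _ _ => MeasurableSet.of_discrete]
  exact Finset.prod_congr rfl fun v _ => signLaw_setOf_decide_eq hp0 hp (f v)

lemma positive_applyOn_neg_eq_false_iff {t : V → ℤ} {A : Set V} {v : V}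
    (hv : positive t v = true) :
    positive (applyOn (fun z : ℤ => -z) A t) v = false ↔ v ∈ A := by
  have htv : t v = 1 := of_decide_eq_true hv
  by_cases hA : v ∈ A
  · simp [positive, applyOn_of_mem hA, htv, hA]
  · simp [positive, applyOn_of_notMem hA, htv, hA]

end SignLaw

theorem wierman_coupling_general {V : Type} [Countable V] [Nonempty V] (r : V → V → Prop) {p : ℝ}
    (hp0 : 0 ≤ p) (hp : p ≤ 1 / 2) {μ : Measure (V → Bool)} (hμ : IsBernoulliFam p μ)
    (Λ S : Set V) (ξ : V → ℕ → Bool) :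
    ∃ ν : Measure ((V → Bool) × (V → Bool)), ν.map Prod.fst = μ ∧ ν.map Prod.snd = μ ∧
      ∀ᵐ w ∂ν, ∀ y, (∃ x ∈ S, OpenConn r Λ w.1 x y) →
        ∃ x ∈ S, ∃ n, ReadsWord r Λ w.2 (ξ x) n x y := by
  have : Nonempty (Probe V) := ‹Nonempty V›.map fun v => ⟨v, v, 0⟩
  have := isProbabilityMeasure_signLaw hp0 hp
  obtain ⟨schedule, hfair⟩ := exists_seq_frequently_eq (Probe V)
  let 𝓔 : Exploration V := ⟨r, Λ, S, schedule⟩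
  let ψ (t : V → ℤ) : V → ℤ := applyOn (fun z => -z) (𝓔.zeroed ξ (positive t)) t
  let P := Measure.infinitePi fun _ : V => signLaw p
  have hψ : MeasurePreserving ψ P P :=
    ((𝓔.isPredictable_zeroing ξ).preimage_comp measurable_from_top).measurePreserving_modified
      fun _ => measurePreserving_neg_signLaw p
  have hfst : MeasurePreserving positive P μ :=
    ⟨measurable_positive, (isBernoulliFam_map_positive hp0 hp).unique hμ⟩
  have hsnd : MeasurePreserving (positive ∘ ψ) P μ := hfst.comp hψ
  have hpair : Measurable fun t => (positive t, positive (ψ t)) :=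
    hfst.measurable.prodMk hsnd.measurable
  refine ⟨P.map fun t => (positive t, positive (ψ t)), ?_, ?_, (ae_map_iff hpair.aemeasurable
    (measurableSet_forall_openConn_imp_readsWord r Λ S ξ)).2 (ae_of_all _ ?_)⟩
  · exact (Measure.map_map measurable_fst hpair).trans hfst.map_eq
  · exact (Measure.map_map measurable_snd hpair).trans hsnd.map_eq
  · rintro t y ⟨x, hx, hxy⟩
    exact 𝓔.exists_readsWord_of_openConn hfair
      (fun v hv => positive_applyOn_neg_eq_false_iff hv) hx hxy

section Lattice

variable {d : ℕ} {ω : Config d} {A : Set (Vtx d)} {x y : Vtx d}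

lemma openConn_of_oneConnIn (h : oneConnIn ω A x y) : OpenConn adj A ω x y := by
  obtain ⟨n, γ, h0, hn, hadj, hγ⟩ := h
  exact ⟨n, γ, ⟨h0, hn, hadj, fun i hi => (hγ i hi).1⟩, fun i hi => (hγ i hi).2⟩

lemma wordConnIn_of_readsWord {w : ℕ → Bool} {n : ℕ} (h : ReadsWord adj A ω w n x y) :
    wordConnIn ω w 0 n A x y := by
  obtain ⟨γ, ⟨h0, hn, hadj, hA⟩, hinj, hw⟩ := h
  exact ⟨n.zero_le, γ, h0, hn, hadj, fun i hi j hj => hinj hi hj, hA,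
    fun i hi => (hw i hi).trans (congrArg w i.zero_add.symm)⟩

end Lattice

/-- **Generalized Wierman coupling** : for `p ∈ (0, 1/2]`, `S ⊆ Λ ⊆ ℤ^d` and a family
of words `(ξ^{(x)})_{x ∈ S}`, there is a coupling `(ω, ω̃)` of two Bernoulli-`p`
configurations such that almost surely, every `y ∈ Λ` joined to `S` by a path of
`1`-vertices in `Λ` in `ω` is reached from some `x ∈ S`, in `ω̃`, by a self-avoiding
path in `Λ` along which the word `ξ^{(x)}` is read. -/
theorem wierman_coupling
    (d : ℕ) (hd : 1 ≤ d) (p : ℝ) (hp0 : 0 < p) (hp : p ≤ 1 / 2)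
    (μ : Measure (Config d)) (hμ : IsBernoulliFam p μ)
    (Λ : Set (Vtx d)) (S : Set (Vtx d)) (hS : S ⊆ Λ)
    (ξf : Vtx d → ℕ → Bool) :
    ∃ ν : Measure (Config d × Config d),
      ν.map Prod.fst = μ ∧ ν.map Prod.snd = μ ∧
      ∀ᵐ w ∂ν, ∀ y ∈ Λ,
        (∃ x ∈ S, oneConnIn w.1 Λ x y) →
        ∃ x ∈ S, ∃ t : ℕ, wordConnIn w.2 (ξf x) 0 t Λ x y := by
  obtain ⟨ν, hfst, hsnd, hν⟩ := wierman_coupling_general adj hp0.le hp hμ Λ S ξf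
  refine ⟨ν, hfst, hsnd, hν.mono fun w hw y _ ⟨x, hx, hxy⟩ => ?_⟩
  obtain ⟨x', hx', n, hread⟩ := hw y ⟨x, hx, openConn_of_oneConnIn hxy⟩
  exact ⟨x', hx', n, wordConnIn_of_readsWord hread⟩

end PercWords
end

section
/- Let d ≥ 1 and p ∈ (0, 1/2]. For every infinite word ξ ∈ Ξ, the ℙ_p-probability that ξ is seen from the origin is at least θ(p), the ℙ_p-probability that the origin lies in an infinite connected set of 1-vertices. -/
open MeasureTheory Set

namespace PercWords

/-- The word `ξ` is seen from `v` along an infinite self-avoiding path all of whose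
vertices lie in `A`. -/
def seesWordIn {d : ℕ} (ω : Config d) (ξ : ℕ → Bool) (A : Set (Vtx d)) (v : Vtx d) : Prop :=
  ∃ γ : ℕ → Vtx d, γ 0 = v ∧ Function.Injective γ ∧
    (∀ i, adj (γ i) (γ (i + 1))) ∧ (∀ i, γ i ∈ A) ∧ (∀ i, ω (γ i) = ξ i)

/-- The word `ξ` is seen from `v` in the configuration `ω`. -/
def seesWord {d : ℕ} (ω : Config d) (ξ : ℕ → Bool) (v : Vtx d) : Prop :=
  seesWordIn ω ξ Set.univ v

/-- `v` lies in an infinite connected set of `1`-vertices of `ω`. -/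
def PercolatesAt {d : ℕ} (ω : Config d) (v : Vtx d) : Prop :=
  ∃ C : Set (Vtx d), v ∈ C ∧ C.Infinite ∧ (∀ u ∈ C, ω u = true) ∧
    ∀ u₁ ∈ C, ∀ u₂ ∈ C, ∃ n : ℕ, ∃ γ : ℕ → Vtx d,
      γ 0 = u₁ ∧ γ n = u₂ ∧ (∀ i < n, adj (γ i) (γ (i + 1))) ∧ (∀ i ≤ n, γ i ∈ C)

/-- The critical point of Bernoulli site percolation on `ℤ^d`, relative to a family
`ℙ p` of Bernoulli site percolation measures: the infimum of the set of parameters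
for which the origin lies in an infinite connected set of `1`-vertices with positive
probability. -/
noncomputable def pcSite (d : ℕ) (ℙ : ℝ → Measure (Config d)) : ℝ :=
  sInf {p : ℝ | p ∈ Set.Icc (0 : ℝ) 1 ∧ 0 < ℙ p {ω | PercolatesAt ω (fun _ => 0)}}

/-!
Explore a finite region from a set of starting vertices, each carrying the word still to be read,
by revealing one such vertex `v` at a time. If `v` turns out to be useful, its neighbours join the
starting vertices, which can only help to leave the region. For paths of `1`-vertices `v` is useful
with probability `p`; for words it is useful if it shows its next letter, which has probability `p`
or `1 - p`, hence at least `p` when `p ≤ 1 / 2`. By induction on the region, leaving it along the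
word is at least as likely as leaving it along `1`-vertices. Exhausting the graph by balls,
Kőnig's lemma turns arbitrarily long word paths into an infinite one.
-/

section DependsOn

lemma dependsOn_of_forall_imp {ι α : Type*} {P : (ι → α) → Prop} {s : Set ι}
    (h : ∀ ω ω', (∀ i ∈ s, ω i = ω' i) → P ω → P ω') : DependsOn P s :=
  fun ω ω' hω => propext ⟨h ω ω' hω, h ω' ω fun i hi => (hω i hi).symm⟩

lemma measurableSet_setOf_of_dependsOn {ι α : Type*} [Finite α] [MeasurableSpace α]
    [MeasurableSingletonClass α] {P : (ι → α) → Prop} {s : Set ι} (hs : s.Finite)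
    (hP : DependsOn P s) : MeasurableSet {ω | P ω} := by
  obtain ⟨Q, rfl⟩ := dependsOn_iff_exists_comp.1 hP
  have := hs.to_subtype
  exact (measurable_pi_lambda s.domRestrict fun i => measurable_pi_apply _)
    (Set.toFinite {η | Q η}).measurableSet

lemma isClosed_setOf_of_dependsOn {ι V : Type*} [TopologicalSpace V] [DiscreteTopology V]
    {P : (ι → V) → Prop} {s : Set ι} (hs : s.Finite) (hP : DependsOn P s) :
    IsClosed {γ | P γ} := by
  obtain ⟨Q, rfl⟩ := dependsOn_iff_exists_comp.1 hP
  have := hs.to_subtype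
  exact (isClosed_discrete {η | Q η}).preimage (Pi.continuous_domRestrict s)

theorem exists_forall_of_dependsOn_Iic {V : Type*} {P : ℕ → (ℕ → V) → Prop} {B : ℕ → Set V}
    (hB : ∀ i, (B i).Finite) (hdep : ∀ n, DependsOn (P n) (Iic n)) (hanti : Antitone P)
    (hPB : ∀ n γ, P n γ → ∀ i ≤ n, γ i ∈ B i) (hne : ∀ n, ∃ γ, P n γ) :
    ∃ γ, ∀ n, P n γ := by
  let _ : TopologicalSpace V := ⊥
  have : DiscreteTopology V := ⟨rfl⟩
  obtain ⟨a⟩ : Nonempty V := (hne 0).nonempty.map (· 0)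
  -- `P n` ignores the coordinates past `n`, so freezing them at `a` confines its solutions to a
  -- compact box even when some `B i` is empty.
  let K : ℕ → Set (ℕ → V) := fun n => (univ.pi fun i => insert a (B i)) ∩ {γ | P n γ}
  have hbox : IsCompact (univ.pi fun i => insert a (B i)) :=
    isCompact_univ_pi fun i => ((hB i).insert a).isCompact
  have hclosed (n : ℕ) : IsClosed (K n) :=
    hbox.isClosed.inter (isClosed_setOf_of_dependsOn (finite_Iic n) (hdep n))
  have hnonempty (n : ℕ) : (K n).Nonempty := by
    obtain ⟨γ, hγ⟩ := hne n
    refine ⟨fun i => if i ≤ n then γ i else a, fun i _ => ?_, ?_⟩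
    · by_cases hi : i ≤ n
      · simpa [hi] using Or.inr (hPB n γ hγ i hi)
      · simp [hi]
    · exact (hdep n fun i hi => (if_pos hi).symm).mp hγ
  obtain ⟨γ, hγ⟩ := IsCompact.nonempty_iInter_of_sequence_nonempty_isCompact_isClosed K
    (fun n => inter_subset_inter_right _ fun γ hγ => hanti n.le_succ γ hγ) hnonempty
    (hbox.inter_right (isClosed_setOf_of_dependsOn (finite_Iic 0) (hdep 0))) hclosed
  exact ⟨γ, fun n => (mem_iInter.1 hγ n).2⟩

end DependsOn

section Bernoulli

variable {ι : Type} {p : ℝ} {μ : Measure (ι → Bool)}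

lemma IsBernoulliFam.measure_eval_eq (hμ : IsBernoulliFam p μ) (x : ι) (b : Bool) :
    μ {ω | ω x = b} = ENNReal.ofReal (if b then p else 1 - p) := by
  simpa using hμ.2 {x} fun _ => b

lemma IsBernoulliFam.iIndepFun_eval (hμ : IsBernoulliFam p μ) :
    ProbabilityTheory.iIndepFun (fun (x : ι) (ω : ι → Bool) => ω x) μ := by
  classical
  have := hμ.1
  have hlaw (x : ι) : IsProbabilityMeasure (μ.map fun ω => ω x) :=
    Measure.isProbabilityMeasure_map (measurable_pi_apply x).aemeasurable
  rw [ProbabilityTheory.iIndepFun_iff_map_fun_eq_infinitePi_map (by fun_prop), Measure.map_id']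
  refine IsProjectiveLimit.unique (fun s => ?_) (Measure.isProjectiveLimit_infinitePi _)
  refine Measure.ext_of_singleton fun η => ?_
  obtain ⟨f, rfl⟩ : ∃ f : ι → Bool, s.restrict f = η :=
    ⟨fun x => if h : x ∈ s then η ⟨x, h⟩ else false, by ext x; simp⟩
  have hcyl : (s.restrict : (ι → Bool) → s → Bool) ⁻¹' {s.restrict f} =
      {ω | ∀ x ∈ s, ω x = f x} := by
    ext ω
    simp [funext_iff]
  rw [Measure.map_apply (by fun_prop) (measurableSet_singleton _), hcyl, hμ.2,
    Measure.pi_singleton, ← Finset.prod_coe_sort]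
  refine Finset.prod_congr rfl fun x _ => ?_
  rw [Measure.map_apply (measurable_pi_apply _) (measurableSet_singleton _),
    ← hμ.measure_eval_eq]
  rfl

lemma IsBernoulliFam.measure_and_eval_eq (hμ : IsBernoulliFam p μ) {P : (ι → Bool) → Prop}
    {s : Finset ι} (hP : DependsOn P s) {x : ι} (hx : x ∉ s) (b : Bool) :
    μ {ω | P ω ∧ ω x = b} = ENNReal.ofReal (if b then p else 1 - p) * μ {ω | P ω} := by
  have hindep := hμ.iIndepFun_eval.indepFun_finset s {x} (by simpa using hx) (by fun_prop)
  obtain ⟨Q, rfl⟩ := dependsOn_iff_exists_comp.1 hP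
  rw [mul_comm, ← hμ.measure_eval_eq x b]
  exact hindep.measure_inter_preimage_eq_mul {η | Q η} {η | η ⟨x, by simp⟩ = b}
    (Set.toFinite _).measurableSet (Set.toFinite _).measurableSet

end Bernoulli

section Splitting

variable {ι : Type} {p : ℝ} {μ : Measure (ι → Bool)} {P Q R : (ι → Bool) → Prop} {s : Finset ι}
  {x : ι}

lemma IsBernoulliFam.measure_le_of_forall_imp (hμ : IsBernoulliFam p μ) (hQ : DependsOn Q s)
    (hR : DependsOn R s) (hx : x ∉ s) (b : Bool) (hPQ : ∀ ω, P ω → ω x = b → Q ω)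
    (hPR : ∀ ω, P ω → ω x = !b → R ω) :
    μ {ω | P ω} ≤ ENNReal.ofReal (if b then p else 1 - p) * μ {ω | Q ω} +
      ENNReal.ofReal (if !b then p else 1 - p) * μ {ω | R ω} := by
  rw [← hμ.measure_and_eval_eq hQ hx, ← hμ.measure_and_eval_eq hR hx]
  refine (measure_mono fun ω hω => ?_).trans (measure_union_le _ _)
  rcases Bool.eq_or_eq_not (ω x) b with hb | hb
  · exact .inl ⟨hPQ ω hω hb, hb⟩
  · exact .inr ⟨hPR ω hω hb, hb⟩

lemma IsBernoulliFam.le_measure_of_forall_imp (hμ : IsBernoulliFam p μ) (hQ : DependsOn Q s)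
    (hR : DependsOn R s) (hx : x ∉ s) (b : Bool) (hQP : ∀ ω, Q ω → ω x = b → P ω)
    (hRP : ∀ ω, R ω → ω x = !b → P ω) :
    ENNReal.ofReal (if b then p else 1 - p) * μ {ω | Q ω} +
      ENNReal.ofReal (if !b then p else 1 - p) * μ {ω | R ω} ≤ μ {ω | P ω} := by
  rw [← hμ.measure_and_eval_eq hQ hx, ← hμ.measure_and_eval_eq hR hx]
  have hmeas : MeasurableSet {ω | R ω ∧ ω x = !b} :=
    (measurableSet_setOf_of_dependsOn s.finite_toSet hR).inter
      (measurable_pi_apply x (measurableSet_singleton _))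
  have hdisj : Disjoint {ω | Q ω ∧ ω x = b} {ω | R ω ∧ ω x = !b} :=
    Set.disjoint_left.2 fun ω hω hω' => by simp [hω.2] at hω'
  rw [← measure_union hdisj hmeas]
  exact measure_mono <| union_subset (fun ω hω => hQP ω hω.1 hω.2) fun ω hω => hRP ω hω.1 hω.2

lemma ofReal_mul_add_le_of_le_half (hp : p ≤ 1 / 2) (b : Bool) {u w : ENNReal} (hwu : w ≤ u) :
    ENNReal.ofReal p * u + ENNReal.ofReal (1 - p) * w ≤
      ENNReal.ofReal (if b then p else 1 - p) * u +
        ENNReal.ofReal (if !b then p else 1 - p) * w := by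
  cases b with
  | true => simp
  | false =>
    obtain ⟨c, hc⟩ := le_iff_exists_add.1 (ENNReal.ofReal_le_ofReal (by linarith : p ≤ 1 - p))
    simp only [hc, Bool.not_false, Bool.false_eq_true, ↓reduceIte]
    calc ENNReal.ofReal p * u + (ENNReal.ofReal p + c) * w
        = ENNReal.ofReal p * u + c * w + ENNReal.ofReal p * w := by ring
      _ ≤ ENNReal.ofReal p * u + c * u + ENNReal.ofReal p * w := by gcongr
      _ = (ENNReal.ofReal p + c) * u + ENNReal.ofReal p * w := by ring

end Splitting

section Reachability

variable {V : Type*} {r : V → V → Prop} {ω ω' : V → Bool} {T : Set V} {S S' : Set V}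
  {v x : V} {ξ : ℕ → Bool}

/-- Some target in `T` can be reached from `v` along `r`, every vertex before the target being a
`1`-vertex of `S`. Nothing is asked of the state of the target. -/
def OpenReaches (r : V → V → Prop) (ω : V → Bool) (T S : Set V) (v : V) : Prop :=
  ∃ t ∈ T, Relation.ReflTransGen (fun a b => a ∈ S ∧ ω a = true ∧ r a b) v t

/-- Some target in `T` can be reached from `v` along `r` through distinct vertices of `S` whose
states spell an initial segment of `ξ`. Nothing is asked of the state of the target.
Self-avoidance is encoded by removing each vertex from `S` as it is read. -/
inductive WordReaches (r : V → V → Prop) (ω : V → Bool) (T : Set V) :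
    Set V → V → (ℕ → Bool) → Prop
  | target {S : Set V} {v : V} {ξ : ℕ → Bool} (hv : v ∈ T) : WordReaches r ω T S v ξ
  | step {S : Set V} {v w : V} {ξ : ℕ → Bool} (hv : v ∈ S) (hξ : ω v = ξ 0) (hvw : r v w)
      (h : WordReaches r ω T (S \ {v}) w fun i => ξ (i + 1)) : WordReaches r ω T S v ξ

lemma OpenReaches.mem (h : OpenReaches r ω T S v) : v ∈ T ∨ v ∈ S := by
  obtain ⟨t, ht, hvt⟩ := h
  rcases hvt.cases_head with rfl | ⟨w, ⟨hv, -⟩, -⟩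
  exacts [.inl ht, .inr hv]

lemma OpenReaches.congr (h : OpenReaches r ω T S v) (hω : ∀ a ∈ S, ω a = ω' a) :
    OpenReaches r ω' T S v := by
  obtain ⟨t, ht, hvt⟩ := h
  exact ⟨t, ht, .mono (fun a b ⟨ha, ha', hab⟩ => ⟨ha, hω a ha ▸ ha', hab⟩) _ _ hvt⟩

lemma OpenReaches.sdiff_of_eq_false (h : OpenReaches r ω T S v) (hx : ω x = false) :
    OpenReaches r ω T (S \ {x}) v := by
  obtain ⟨t, ht, hvt⟩ := h
  refine ⟨t, ht, .mono (fun a b ⟨ha, ha', hab⟩ => ⟨⟨ha, ?_⟩, ha', hab⟩) _ _ hvt⟩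
  rintro rfl
  simp [hx] at ha'

lemma OpenReaches.sdiff_or_exists_rel (h : OpenReaches r ω T S v) (x : V) :
    OpenReaches r ω T (S \ {x}) v ∨ ∃ w, r x w ∧ OpenReaches r ω T (S \ {x}) w := by
  obtain ⟨t, ht, hvt⟩ := h
  induction hvt using Relation.ReflTransGen.head_induction_on with
  | refl => exact .inl ⟨t, ht, .refl⟩
  | @head a b hab _ ih =>
    obtain ⟨ha, hopen, hrel⟩ := hab
    refine ih.elim (fun hb => ?_) .inr
    by_cases hax : a = x
    · exact .inr ⟨b, hax ▸ hrel, hb⟩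
    · obtain ⟨t', ht', hbt'⟩ := hb
      exact .inl ⟨t', ht', .head ⟨⟨ha, hax⟩, hopen, hrel⟩ hbt'⟩

lemma WordReaches.congr (h : WordReaches r ω T S v ξ) (hω : ∀ a ∈ S, ω a = ω' a) :
    WordReaches r ω' T S v ξ := by
  induction h with
  | target hv => exact .target hv
  | step hv hξ hvw _ ih => exact .step hv (hω _ hv ▸ hξ) hvw (ih fun a ha => hω a ha.1)

lemma WordReaches.mono (h : WordReaches r ω T S v ξ) (hS : S ⊆ S') :
    WordReaches r ω T S' v ξ := by
  induction h generalizing S' with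
  | target hv => exact .target hv
  | step hv hξ hvw _ ih => exact .step (hS hv) hξ hvw (ih (sdiff_subset_sdiff_left hS))

end Reachability

section Exploration

variable {V : Type} {r : V → V → Prop} {p : ℝ} {μ : Measure (V → Bool)}

/-- The event that `T` is reached through the `1`-vertices of `S` from some starting vertex of `F`.
Starting vertices carry words so that the event can be compared with `wordEvent`. -/
def openEvent (r : V → V → Prop) (T S : Set V) (F : Set (V × (ℕ → Bool))) : Set (V → Bool) :=
  {ω | ∃ x ∈ F, OpenReaches r ω T S x.1}

/-- The event that `T` is reached inside `S` from some starting vertex of `F` along a self-avoiding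
path spelling the word attached to that vertex. -/
def wordEvent (r : V → V → Prop) (T S : Set V) (F : Set (V × (ℕ → Bool))) : Set (V → Bool) :=
  {ω | ∃ x ∈ F, WordReaches r ω T S x.1 x.2}

/-- The frontier after `v` has been found to carry the first letter of `η`: every out-neighbour of
`v` becomes a starting vertex for the remaining letters of `η`. -/
def extendFrontier (r : V → V → Prop) (F : Set (V × (ℕ → Bool))) (v : V) (η : ℕ → Bool) :
    Set (V × (ℕ → Bool)) :=
  F ∪ {x | r v x.1 ∧ x.2 = fun i => η (i + 1)}

lemma dependsOn_mem_openEvent (T S : Set V) (F : Set (V × (ℕ → Bool))) :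
    DependsOn (· ∈ openEvent r T S F) S :=
  dependsOn_of_forall_imp fun _ _ hω ⟨x, hx, h⟩ => ⟨x, hx, h.congr hω⟩

lemma dependsOn_mem_wordEvent (T S : Set V) (F : Set (V × (ℕ → Bool))) :
    DependsOn (· ∈ wordEvent r T S F) S :=
  dependsOn_of_forall_imp fun _ _ hω ⟨x, hx, h⟩ => ⟨x, hx, h.congr hω⟩

lemma openEvent_mono {T S : Set V} {F F' : Set (V × (ℕ → Bool))} (hF : F ⊆ F') :
    openEvent r T S F ⊆ openEvent r T S F' :=
  fun _ ⟨x, hx, h⟩ => ⟨x, hF hx, h⟩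

lemma IsBernoulliFam.measure_openEvent_le [DecidableEq V] (hμ : IsBernoulliFam p μ)
    (T : Set V) (S : Finset V) (F : Set (V × (ℕ → Bool))) (v : V) (η : ℕ → Bool) :
    μ (openEvent r T S F) ≤
      ENNReal.ofReal p * μ (openEvent r T (S.erase v) (extendFrontier r F v η)) +
        ENNReal.ofReal (1 - p) * μ (openEvent r T (S.erase v) F) := by
  refine hμ.measure_le_of_forall_imp (dependsOn_mem_openEvent T _ _)
    (dependsOn_mem_openEvent T _ _) (S.notMem_erase v) true ?_ ?_
  · rintro ω ⟨x, hx, h⟩ -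
    rw [Finset.coe_erase]
    rcases h.sdiff_or_exists_rel v with h | ⟨w, hvw, h⟩
    · exact ⟨x, .inl hx, h⟩
    · exact ⟨(w, _), .inr ⟨hvw, rfl⟩, h⟩
  · rintro ω ⟨x, hx, h⟩ hv
    rw [Finset.coe_erase]
    exact ⟨x, hx, h.sdiff_of_eq_false hv⟩

lemma IsBernoulliFam.le_measure_wordEvent [DecidableEq V] (hμ : IsBernoulliFam p μ)
    (T : Set V) {S : Finset V} {F : Set (V × (ℕ → Bool))} {v : V} {η : ℕ → Bool}
    (hvF : (v, η) ∈ F) (hvS : v ∈ S) :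
    ENNReal.ofReal (if η 0 then p else 1 - p) *
          μ (wordEvent r T (S.erase v) (extendFrontier r F v η)) +
        ENNReal.ofReal (if !η 0 then p else 1 - p) * μ (wordEvent r T (S.erase v) F) ≤
      μ (wordEvent r T S F) := by
  have hsub : ((S.erase v : Finset V) : Set V) ⊆ S := by simp
  refine hμ.le_measure_of_forall_imp (dependsOn_mem_wordEvent T _ _)
    (dependsOn_mem_wordEvent T _ _) (S.notMem_erase v) (η 0) ?_ ?_
  · rintro ω ⟨⟨w, ζ⟩, hx | ⟨hvw, rfl : ζ = _⟩, h⟩ hv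
    · exact ⟨(w, ζ), hx, h.mono hsub⟩
    · exact ⟨(v, η), hvF, .step hvS hv hvw (by simpa using h)⟩
  · rintro ω ⟨x, hx, h⟩ -
    exact ⟨x, hx, h.mono hsub⟩

theorem IsBernoulliFam.measure_openEvent_le_measure_wordEvent (hμ : IsBernoulliFam p μ)
    (hp : p ≤ 1 / 2) (T : Set V) (S : Finset V) (F : Set (V × (ℕ → Bool))) :
    μ (openEvent r T S F) ≤ μ (wordEvent r T S F) := by
  classical
  induction S using Finset.strongInduction generalizing F with
  | H S ih =>
    by_cases hT : ∃ x ∈ F, x.1 ∈ T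
    · obtain ⟨x, hx, hxT⟩ := hT
      exact measure_mono fun ω _ => ⟨x, hx, .target hxT⟩
    by_cases hS : ∃ x ∈ F, x.1 ∈ S
    · obtain ⟨⟨v, η⟩, hvF, hvS⟩ := hS
      have ihv := ih (S.erase v) (Finset.erase_ssubset hvS)
      set F' := extendFrontier r F v η
      calc μ (openEvent r T S F)
          ≤ ENNReal.ofReal p * μ (openEvent r T (S.erase v) F') +
              ENNReal.ofReal (1 - p) * μ (openEvent r T (S.erase v) F) :=
            hμ.measure_openEvent_le T S F v η
        _ ≤ ENNReal.ofReal (if η 0 then p else 1 - p) * μ (openEvent r T (S.erase v) F') +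
              ENNReal.ofReal (if !η 0 then p else 1 - p) * μ (openEvent r T (S.erase v) F) :=
            ofReal_mul_add_le_of_le_half hp (η 0)
              (measure_mono (openEvent_mono subset_union_left))
        _ ≤ ENNReal.ofReal (if η 0 then p else 1 - p) * μ (wordEvent r T (S.erase v) F') +
              ENNReal.ofReal (if !η 0 then p else 1 - p) * μ (wordEvent r T (S.erase v) F) := by
            gcongr _ * ?_ + _ * ?_
            exacts [ihv F', ihv F]
        _ ≤ μ (wordEvent r T S F) := hμ.le_measure_wordEvent T hvF hvS
    · exact measure_mono fun ω ⟨x, hx, h⟩ =>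
        (h.mem.elim (fun hxT => hT ⟨x, hx, hxT⟩) fun hxS => hS ⟨x, hx, hxS⟩).elim

end Exploration

section WordPath

variable {V : Type*} {r : V → V → Prop} {ω : V → Bool} {ξ : ℕ → Bool} {v w : V} {n : ℕ}
  {γ : ℕ → V}

/-- `γ 0, …, γ n` follows `r` from `v`, and its first `n` vertices are distinct and spell the first
`n` letters of `ξ`; the last vertex `γ n` is unconstrained, and the rest of `γ` is junk. -/
structure IsWordPath (r : V → V → Prop) (ω : V → Bool) (ξ : ℕ → Bool) (v : V) (n : ℕ)
    (γ : ℕ → V) : Prop where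
  zero_eq : γ 0 = v
  rel : ∀ i < n, r (γ i) (γ (i + 1))
  injOn : InjOn γ (Iio n)
  state_eq : ∀ i < n, ω (γ i) = ξ i

lemma IsWordPath.antitone (r : V → V → Prop) (ω : V → Bool) (ξ : ℕ → Bool) (v : V) :
    Antitone (IsWordPath r ω ξ v) :=
  fun _ _ hmn _ h => ⟨h.zero_eq, fun i hi => h.rel i (hi.trans_le hmn),
    h.injOn.mono (Iio_subset_Iio hmn), fun i hi => h.state_eq i (hi.trans_le hmn)⟩

lemma IsWordPath.dependsOn (r : V → V → Prop) (ω : V → Bool) (ξ : ℕ → Bool) (v : V) (n : ℕ) :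
    DependsOn (IsWordPath r ω ξ v n) (Iic n) :=
  dependsOn_of_forall_imp fun _ _ hγ h =>
    { zero_eq := hγ 0 n.zero_le ▸ h.zero_eq
      rel := fun i hi => hγ i hi.le ▸ hγ (i + 1) hi ▸ h.rel i hi
      injOn := h.injOn.congr fun i hi => hγ i (mem_Iio.1 hi).le
      state_eq := fun i hi => hγ i hi.le ▸ h.state_eq i hi }

lemma IsWordPath.cons (h : IsWordPath r ω (fun i => ξ (i + 1)) w n γ) (hvw : r v w)
    (hv : ω v = ξ 0) (hvγ : ∀ i < n, γ i ≠ v) :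
    IsWordPath r ω ξ v (n + 1) fun i => Nat.casesOn i v γ where
  zero_eq := rfl
  rel := by
    rintro (_ | i) hi
    · change r v (γ 0)
      rwa [h.zero_eq]
    · exact h.rel i (by lia)
  injOn := by
    rintro (_ | i) hi (_ | j) hj hij
    · rfl
    · exact absurd hij.symm (hvγ j (by simpa using hj))
    · exact absurd hij (hvγ i (by simpa using hi))
    · rw [h.injOn (by simpa using hi) (by simpa using hj) hij]
  state_eq := by
    rintro (_ | i) hi
    · exact hv
    · exact h.state_eq i (by lia)

lemma WordReaches.exists_isWordPath {T S : Set V} (h : WordReaches r ω T S v ξ) :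
    ∃ n γ, IsWordPath r ω ξ v n γ ∧ (∀ i < n, γ i ∈ S) ∧ γ n ∈ T := by
  induction h with
  | @target S v ξ hv => exact ⟨0, fun _ => v, ⟨rfl, by simp, by simp, by simp⟩, by simp, hv⟩
  | @step S v w ξ hv hξ hvw _ ih =>
    obtain ⟨n, γ, hγ, hS, hT⟩ := ih
    refine ⟨n + 1, fun i => Nat.casesOn i v γ, hγ.cons hvw hξ fun i hi => (hS i hi).2, ?_, hT⟩
    rintro (_ | i) hi
    · exact hv
    · exact (hS i (by lia)).1

/-- The set of vertices reached from `v` in exactly `n` steps along `r`, repetitions allowed. -/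
def layer (r : V → V → Prop) (v : V) : ℕ → Set V
  | 0 => {v}
  | n + 1 => {w | ∃ u ∈ layer r v n, r u w}

lemma finite_layer (hr : ∀ u, {w | r u w}.Finite) (v : V) (n : ℕ) : (layer r v n).Finite := by
  induction n with
  | zero => exact finite_singleton v
  | succ n ih =>
    refine (ih.biUnion fun u _ => hr u).subset fun w ⟨u, hu, huw⟩ => ?_
    exact mem_biUnion hu huw

/-- The set of vertices reached from `v` in fewer than `n` steps along `r`. -/
def ball (r : V → V → Prop) (v : V) (n : ℕ) : Set V := ⋃ i < n, layer r v i

lemma finite_ball (hr : ∀ u, {w | r u w}.Finite) (v : V) (n : ℕ) : (ball r v n).Finite :=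
  (finite_Iio n).biUnion fun i _ => finite_layer hr v i

lemma IsWordPath.mem_layer (h : IsWordPath r ω ξ v n γ) : ∀ i ≤ n, γ i ∈ layer r v i
  | 0, _ => h.zero_eq
  | i + 1, hi => ⟨γ i, h.mem_layer i (by lia), h.rel i hi⟩

lemma exists_isWordPath_of_wordReaches_compl {S : Set V}
    (h : WordReaches r ω (ball r v n)ᶜ S v ξ) : ∃ γ, IsWordPath r ω ξ v n γ := by
  obtain ⟨k, γ, hγ, -, hk⟩ := h.exists_isWordPath
  refine ⟨γ, IsWordPath.antitone r ω ξ v (not_lt.1 fun hkn => hk ?_) γ hγ⟩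
  exact mem_biUnion hkn (hγ.mem_layer k le_rfl)

lemma dependsOn_exists_isWordPath (r : V → V → Prop) (ξ : ℕ → Bool) (v : V) (n : ℕ) :
    DependsOn (fun ω => ∃ γ, IsWordPath r ω ξ v n γ) (ball r v n) :=
  dependsOn_of_forall_imp fun _ _ hω ⟨γ, hγ⟩ =>
    ⟨γ, hγ.zero_eq, hγ.rel, hγ.injOn, fun i hi =>
      hω (γ i) (mem_biUnion hi (hγ.mem_layer i hi.le)) ▸ hγ.state_eq i hi⟩

lemma exists_infinite_word_path (hr : ∀ u, {w | r u w}.Finite)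
    (h : ∀ n, ∃ γ, IsWordPath r ω ξ v n γ) :
    ∃ γ : ℕ → V, γ 0 = v ∧ γ.Injective ∧ (∀ i, r (γ i) (γ (i + 1))) ∧ ∀ i, ω (γ i) = ξ i := by
  obtain ⟨γ, hγ⟩ := exists_forall_of_dependsOn_Iic (finite_layer hr v)
    (IsWordPath.dependsOn r ω ξ v) (IsWordPath.antitone r ω ξ v) (fun n γ hγ => hγ.mem_layer) h
  refine ⟨γ, (hγ 0).zero_eq, fun i j hij => ?_, fun i => (hγ (i + 1)).rel i i.lt_succ_self,
    fun i => (hγ (i + 1)).state_eq i i.lt_succ_self⟩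
  exact (hγ (max i j + 1)).injOn (by simp) (by simp) hij

end WordPath

section OpenCluster

/-- The set of vertices reached from `v` along `r` through `1`-vertices. It always contains `v`,
so it is `{v}` when `v` is a `0`-vertex. -/
def openCluster {V : Type*} (r : V → V → Prop) (ω : V → Bool) (v : V) : Set V :=
  {w | Relation.ReflTransGen (fun a b => r a b ∧ ω a = true ∧ ω b = true) v w}

lemma openReaches_compl_of_mem_openCluster {V : Type*} {r : V → V → Prop} {ω : V → Bool} {v w : V}
    {S : Set V} (hw : w ∈ openCluster r ω v) (hwS : w ∉ S) : OpenReaches r ω Sᶜ S v := by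
  induction hw using Relation.ReflTransGen.head_induction_on with
  | refl => exact ⟨w, hwS, .refl⟩
  | @head a b hab _ ih =>
    by_cases ha : a ∈ S
    · obtain ⟨t, ht, hbt⟩ := ih
      exact ⟨t, ht, .head ⟨ha, hab.2.1, hab.1⟩ hbt⟩
    · exact ⟨a, ha, .refl⟩

lemma measure_infinite_openCluster_le_exists_isWordPath {V : Type} {r : V → V → Prop}
    (hr : ∀ u, {w | r u w}.Finite) {p : ℝ} (hp : p ≤ 1 / 2) {μ : Measure (V → Bool)}
    (hμ : IsBernoulliFam p μ) (ξ : ℕ → Bool) (v : V) (n : ℕ) :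
    μ {ω | (openCluster r ω v).Infinite} ≤ μ {ω | ∃ γ, IsWordPath r ω ξ v n γ} := by
  obtain ⟨S, hS⟩ := (finite_ball hr v n).exists_finset_coe
  calc μ {ω | (openCluster r ω v).Infinite}
      ≤ μ (openEvent r (S : Set V)ᶜ S {(v, ξ)}) := measure_mono fun ω hω => by
        obtain ⟨w, hw, hwS⟩ := hω.exists_notMem_finset S
        exact ⟨(v, ξ), rfl, openReaches_compl_of_mem_openCluster hw hwS⟩
    _ ≤ μ (wordEvent r (S : Set V)ᶜ S {(v, ξ)}) :=
        hμ.measure_openEvent_le_measure_wordEvent hp _ S _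
    _ ≤ μ {ω | ∃ γ, IsWordPath r ω ξ v n γ} := measure_mono fun ω ⟨x, hx, h⟩ => by
        obtain rfl : x = (v, ξ) := hx
        exact exists_isWordPath_of_wordReaches_compl (hS ▸ h)

theorem wierman_word_bound_general {V : Type} {r : V → V → Prop} (hr : ∀ u, {w | r u w}.Finite)
    {p : ℝ} (hp : p ≤ 1 / 2) {μ : Measure (V → Bool)} (hμ : IsBernoulliFam p μ) (ξ : ℕ → Bool)
    (v : V) :
    μ {ω | (openCluster r ω v).Infinite} ≤
      μ {ω | ∃ γ : ℕ → V, γ 0 = v ∧ γ.Injective ∧ (∀ i, r (γ i) (γ (i + 1))) ∧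
        ∀ i, ω (γ i) = ξ i} := by
  have := hμ.1
  have hmeas (n : ℕ) : MeasurableSet {ω | ∃ γ, IsWordPath r ω ξ v n γ} :=
    measurableSet_setOf_of_dependsOn (finite_ball hr v n) (dependsOn_exists_isWordPath r ξ v n)
  have hanti : Antitone fun n => {ω | ∃ γ, IsWordPath r ω ξ v n γ} :=
    fun m n hmn ω ⟨γ, hγ⟩ => ⟨γ, IsWordPath.antitone r ω ξ v hmn γ hγ⟩
  calc μ {ω | (openCluster r ω v).Infinite}
      ≤ ⨅ n, μ {ω | ∃ γ, IsWordPath r ω ξ v n γ} :=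
        le_iInf (measure_infinite_openCluster_le_exists_isWordPath hr hp hμ ξ v)
    _ = μ (⋂ n, {ω | ∃ γ, IsWordPath r ω ξ v n γ}) :=
        (hanti.measure_iInter (fun n => (hmeas n).nullMeasurableSet) ⟨0, measure_ne_top _ _⟩).symm
    _ ≤ _ := measure_mono fun ω hω => exists_infinite_word_path hr (mem_iInter.1 hω)

end OpenCluster

section Lattice

variable {d : ℕ}

lemma finite_setOf_adj (v : Vtx d) : {w | adj v w}.Finite := by
  refine (finite_Icc (v - 1) (v + 1)).subset fun w hw => ?_
  have hcoord (i : Fin d) : |v i - w i| ≤ 1 := by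
    rw [← sq_le_one_iff_abs_le_one, ← show ∑ i, (v i - w i) ^ 2 = 1 from hw]
    exact Finset.single_le_sum (fun j _ => sq_nonneg (v j - w j)) (Finset.mem_univ i)
  have hbound (i : Fin d) : v i - 1 ≤ w i ∧ w i ≤ v i + 1 := by
    have := abs_le.1 (hcoord i)
    lia
  exact ⟨fun i => (hbound i).1, fun i => (hbound i).2⟩

lemma PercolatesAt.infinite_openCluster {ω : Config d} {v : Vtx d} (h : PercolatesAt ω v) :
    (openCluster adj ω v).Infinite := by
  obtain ⟨C, hv, hinf, hone, hconn⟩ := h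
  refine hinf.mono fun w hw => ?_
  obtain ⟨n, γ, rfl, rfl, hadj, hC⟩ := hconn v hv w hw
  have hstep (i : ℕ) (hi : i < n) :
      adj (γ i) (γ (i + 1)) ∧ ω (γ i) = true ∧ ω (γ (i + 1)) = true :=
    ⟨hadj i hi, hone _ (hC i hi.le), hone _ (hC (i + 1) hi)⟩
  exact (reflTransGen_of_succ_of_le _ (fun i hi => hstep i hi.2) n.zero_le).lift γ
    (fun _ _ h => h)

end Lattice

/-- **Wierman's bound** : for `d ≥ 1` and `p ∈ (0, 1/2]`, for every infinite word `ξ`,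
the probability that `ξ` is seen from the origin is at least `θ(p)`, the probability
that the origin lies in an infinite connected set of `1`-vertices. -/
theorem wierman_word_bound
    (d : ℕ) (hd : 1 ≤ d) (p : ℝ) (hp0 : 0 < p) (hp : p ≤ 1 / 2)
    (μ : Measure (Config d)) (hμ : IsBernoulliFam p μ) (ξ : ℕ → Bool) :
    μ {ω | PercolatesAt ω (fun _ => 0)} ≤ μ {ω | seesWord ω ξ (fun _ => 0)} := by
  refine (measure_mono fun ω h => h.infinite_openCluster).trans
    ((wierman_word_bound_general finite_setOf_adj hp hμ ξ _).trans (measure_mono ?_))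
  exact fun ω ⟨γ, h0, hinj, hadj, hξ⟩ => ⟨γ, h0, hinj, hadj, fun _ => mem_univ _, hξ⟩

end PercWords
end
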